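/- arXiv:2311.13178 — 2 statements merged into one kernel-verified Lean document; each statement's English description precedes it below -/
import Mathlib

section
/- Let A be a unital complex algebra equipped with a unital linear functional Ψ and a tracial linear functional DΨ with DΨ(1_A) = 0. Then the cyclic free cumulants Dκ^Ψ_n of the pair (Ψ, DΨ) are cyclically invariant: for all a₁,…,aₙ ∈ A, Dκ^Ψ_n(a₁,…,aₙ) = Dκ^Ψ_n(a₂,…,aₙ,a₁). -/
open scoped BigOperators

namespace NCProb

variable {A : Type*} [Ring A] [Algebra ℂ A]

/-- Ordered sublist of the tuple `a` on the indices satisfying `P`. -/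
noncomputable def ordList {n : ℕ} (a : Fin n → A) (P : Fin n → Prop) [DecidablePred P] :
    List A :=
  ((List.finRange n).filter fun i => decide (P i)).map a

/-- `(a, j)` is an alternating sequence for the pair of sets `(S₁, S₂)`:
`a i ∈ S₁` when `j i = false`, `a i ∈ S₂` when `j i = true`, and consecutive labels differ. -/
def Alternates {n : ℕ} (S₁ S₂ : Set A) (a : Fin n → A) (j : Fin n → Bool) : Prop :=
  (∀ i, a i ∈ (if j i then S₂ else S₁)) ∧
    ∀ (i : ℕ) (h : i + 1 < n), j ⟨i, Nat.lt_of_succ_lt h⟩ ≠ j ⟨i + 1, h⟩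

def IsTracial (ω : A →ₗ[ℂ] ℂ) : Prop := ∀ a b : A, ω (a * b) = ω (b * a)

/-- Freeness of a pair of subalgebras (given as sets) with respect to `Ψ`. -/
def IsFree (Ψ : A →ₗ[ℂ] ℂ) (S₁ S₂ : Set A) : Prop :=
  ∀ (n : ℕ) (a : Fin n → A) (j : Fin n → Bool),
    Alternates S₁ S₂ a j → (∀ i, Ψ (a i) = 0) → Ψ (List.ofFn a).prod = 0

/-- Conditional freeness with respect to the pair `(Ψ, φ)`. -/
def IsCondFree (Ψ φ : A →ₗ[ℂ] ℂ) (S₁ S₂ : Set A) : Prop :=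
  ∀ (n : ℕ) (a : Fin n → A) (j : Fin n → Bool),
    Alternates S₁ S₂ a j → (∀ i, Ψ (a i) = 0) →
      Ψ (List.ofFn a).prod = 0 ∧ φ (List.ofFn a).prod = ∏ i, φ (a i)

/-- Cyclic freeness with respect to the pair `(Ψ, ω)`. -/
def IsCyclicallyFree (Ψ ω : A →ₗ[ℂ] ℂ) (S₁ S₂ : Set A) : Prop :=
  IsFree Ψ S₁ S₂ ∧
    ∀ (n : ℕ) (a : Fin n → A) (j : Fin n → Bool) (hn : 2 ≤ n),
      Alternates S₁ S₂ a j →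
      j ⟨0, by omega⟩ ≠ j ⟨n - 1, by omega⟩ →
      (∀ i, Ψ (a i) = 0) → ω (List.ofFn a).prod = 0

/-- Infinitesimal freeness with respect to the pair `(Ψ, ω)`. -/
def IsInfFree (Ψ ω : A →ₗ[ℂ] ℂ) (S₁ S₂ : Set A) : Prop :=
  ∀ (n : ℕ) (a : Fin n → A) (j : Fin n → Bool),
    Alternates S₁ S₂ a j → (∀ i, Ψ (a i) = 0) →
      Ψ (List.ofFn a).prod = 0 ∧
      ω (List.ofFn a).prod = ∑ i : Fin n, ω (a i) * Ψ (ordList a fun k => k ≠ i).prod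

/-- Cyclic-conditional freeness with respect to the triple `(Ψ, φ, ω)`. -/
def IsCycCondFree (Ψ φ ω : A →ₗ[ℂ] ℂ) (S₁ S₂ : Set A) : Prop :=
  IsCondFree Ψ φ S₁ S₂ ∧
    ∀ (n : ℕ) (a : Fin n → A) (j : Fin n → Bool) (hn : 2 ≤ n),
      Alternates S₁ S₂ a j →
      j ⟨0, by omega⟩ ≠ j ⟨n - 1, by omega⟩ →
      (∀ i, Ψ (a i) = 0) → ω (List.ofFn a).prod = ∏ i, φ (a i)

/-- Boolean cumulants (with explicit fuel), via the standard recursion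
`φ(a₁⋯aₙ) = Σ_{k=1}^{n} β_k(a₁,…,a_k)·φ(a_{k+1}⋯aₙ)`. -/
noncomputable def booleanAux (φ : A →ₗ[ℂ] ℂ) : ℕ → List A → ℂ
  | 0, _ => 0
  | fuel + 1, l =>
      φ l.prod - ∑ k ∈ Finset.range (l.length - 1),
        booleanAux φ fuel (l.take (k + 1)) * φ (l.drop (k + 1)).prod

/-- The Boolean cumulant `β^φ(a₁,…,aₙ)` of the entries of the list `l = [a₁,…,aₙ]`. -/
noncomputable def booleanCumulant (φ : A →ₗ[ℂ] ℂ) (l : List A) : ℂ :=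
  booleanAux φ l.length l

/-- Product of the `Ψ`-moments of the gaps between consecutive elements of `V`. -/
noncomputable def gapFactor {n : ℕ} (Ψ : A →ₗ[ℂ] ℂ) (a : Fin n → A) (V : Finset (Fin n)) : ℂ :=
  (((V.sort (· ≤ ·)).zip (V.sort (· ≤ ·)).tail).map fun p =>
      Ψ (ordList a fun i => p.1 < i ∧ i < p.2).prod).prod

noncomputable def headProd {n : ℕ} (a : Fin n → A) (V : Finset (Fin n)) : A :=
  (ordList a fun i => ∀ v ∈ V, i < v).prod

noncomputable def tailProd {n : ℕ} (a : Fin n → A) (V : Finset (Fin n)) : A :=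
  (ordList a fun i => ∀ v ∈ V, v < i).prod

/-- Cumulants with respect to `(Ψ, θ)` with explicit fuel, defined through the
moment-cumulant recursion obtained by singling out the distinguished block `V`:
mode 0: free cumulants (`θ = Ψ`, the block `V` contains the first letter);
mode 1: infinitesimal free cumulants (wrap gap read in linear order `head·tail`);
mode 2: cyclic free cumulants (wrap gap read in cyclic order `tail·head`). -/
noncomputable def cumulAux (Ψ θ : A →ₗ[ℂ] ℂ) (mode : ℕ) : ℕ → List A → ℂ
  | 0, _ => 0
  | fuel + 1, l =>
      θ l.prod - ∑ V : Finset (Fin l.length),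
        if V.Nonempty ∧ V ≠ Finset.univ ∧ (mode ≠ 0 ∨ ∃ v ∈ V, (v : ℕ) = 0) then
          cumulAux Ψ θ mode fuel ((V.sort (· ≤ ·)).map l.get) *
            Ψ (if mode = 2 then tailProd l.get V * headProd l.get V
               else headProd l.get V * tailProd l.get V) *
            gapFactor Ψ l.get V
        else 0

/-- The free cumulant `κ^Ψ_n(a₁,…,aₙ)`. -/
noncomputable def freeCumulant (Ψ : A →ₗ[ℂ] ℂ) (l : List A) : ℂ :=
  cumulAux Ψ Ψ 0 l.length l

/-- The infinitesimal free cumulant `∂κ^Ψ_n(a₁,…,aₙ)` of the pair `(Ψ, dΨ)`. -/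
noncomputable def infCumulant (Ψ dΨ : A →ₗ[ℂ] ℂ) (l : List A) : ℂ :=
  cumulAux Ψ dΨ 1 l.length l

/-- The cyclic free cumulant `Dκ^Ψ_n(a₁,…,aₙ)` of the pair `(Ψ, dΨ)`. -/
noncomputable def cycCumulant (Ψ dΨ : A →ₗ[ℂ] ℂ) (l : List A) : ℂ :=
  cumulAux Ψ dΨ 2 l.length l

/-- Vanishing of mixed cumulants: `f` vanishes on mixed tuples from `S₁ ∪ S₂`. -/
def MixedVanishes (f : List A → ℂ) (S₁ S₂ : Set A) : Prop :=
  ∀ (n : ℕ) (a : Fin n → A), 2 ≤ n → (∀ i, a i ∈ S₁ ∪ S₂) →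
    (∃ k, a k ∈ S₁) → (∃ l, a l ∈ S₂) → f (List.ofFn a) = 0

/-- The value `[φ](a₁ ⊗ ⋯ ⊗ aₙ) = Σ_{1≤i₁<…<i_ℓ≤n} ∏_k β^φ`(cyclic pieces)`. -/
noncomputable def mkValue (φ : A →ₗ[ℂ] ℂ) {n : ℕ} (a : Fin n → A) : ℂ :=
  ∑ V : Finset (Fin n),
    if V.Nonempty then
      (((V.sort (· ≤ ·)).zip (V.sort (· ≤ ·)).tail).map fun p =>
          booleanCumulant φ (ordList a fun i => p.1 ≤ i ∧ i < p.2)).prod *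
        booleanCumulant φ
          ((ordList a fun i => ∀ v ∈ V, v ≤ i) ++ ordList a fun i => ∀ v ∈ V, i < v)
    else 0

/-- Non-crossing partitions of `{1,…,n}` encoded as finsets of blocks. -/
def IsNCPartition {n : ℕ} (P : Finset (Finset (Fin n))) : Prop :=
  (∀ B ∈ P, B.Nonempty) ∧
    (∀ i : Fin n, ∃! B, B ∈ P ∧ i ∈ B) ∧
    ∀ B₁ ∈ P, ∀ B₂ ∈ P, ∀ p ∈ B₁, ∀ r ∈ B₁, ∀ q ∈ B₂, ∀ s ∈ B₂,
      p < q → q < r → r < s → B₁ = B₂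

open scoped Classical in
/-- The value `⌞Ψ⌟(a₁⊗⋯⊗aₙ) = Σ_{π ∈ NC(n)} (n+1-|π|)·κ^Ψ_π(a₁,…,aₙ)`. -/
noncomputable def lsoulValue (Ψ : A →ₗ[ℂ] ℂ) {n : ℕ} (a : Fin n → A) : ℂ :=
  ∑ P : Finset (Finset (Fin n)),
    if IsNCPartition P then
      ((n : ℂ) + 1 - P.card) * ∏ B ∈ P, freeCumulant Ψ ((B.sort (· ≤ ·)).map a)
    else 0

/-- `F` extends the linear functional `f` from `A` to the tensor algebra `T(A)`:
`F(a₁ ⊗ ⋯ ⊗ aₙ) = f(a₁⋯aₙ)`. -/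
def ExtendsTo (f : A →ₗ[ℂ] ℂ) (F : TensorAlgebra ℂ A →ₗ[ℂ] ℂ) : Prop :=
  ∀ l : List A, l ≠ [] → F (l.map fun x => TensorAlgebra.ι ℂ x).prod = f l.prod

/-!
The moment–cumulant recursion for `Dκ^Ψ` singles out a block `V` and weights it by the
`Ψ`-moments of its gaps. Because the gap wrapping around the end of the word is read in cyclic
order, these are the gaps of `V` on a circle, and rotating the word together with `V` preserves
their product. When the first letter is moved to the end, either it lies outside `V`, and the
wrap-around gap does not even change as a product in `A`, or it lies in `V`, and the gaps on its
two sides exchange the roles of inner and wrap-around gap. Rotating the word also rotates the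
restriction of the word to `V`, so the recursion preserves rotation invariance; traciality gives
the moment term.
-/

section ListLemmas

variable {α β : Type*}

theorem zip_tail_append_pair (l : List α) (t u : α) :
    (l ++ [t, u]).zip (l ++ [t, u]).tail = (l ++ [t]).zip (l ++ [t]).tail ++ [(t, u)] := by
  induction l with
  | nil => rfl
  | cons c l ih =>
    cases l with
    | nil => rfl
    | cons d l => simpa using ih

theorem eq_of_isRotated_of_forall_rotate_one {f : List α → β} (hf : ∀ l, f (l.rotate 1) = f l)
    {l l' : List α} (h : l ~r l') : f l = f l' := by
  obtain ⟨k, rfl⟩ := h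
  induction k with
  | zero => rw [List.rotate_zero]
  | succ k ih => rw [← List.rotate_rotate, hf, ih]

theorem ofFn_comp_finRotate {n : ℕ} (a : Fin n → α) :
    List.ofFn (a ∘ finRotate n) = (List.ofFn a).rotate 1 := by
  cases n with
  | zero => simp
  | succ n =>
    rw [List.ofFn_succ', List.ofFn_succ, List.rotate_cons_succ, List.rotate_zero]
    simp

end ListLemmas

section SortLemmas

variable {α : Type*} [LinearOrder α]

theorem sort_insert_of_forall_lt {s : Finset α} {a : α} (h : ∀ b ∈ s, b < a) :
    (insert a s).sort = s.sort ++ [a] := by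
  have hset : insert a s = (s.sort ++ [a]).toFinset := by ext; simp
  have hdisj : s.sort.Disjoint [a] := by
    simpa using fun ha => (h a ha).false
  rw [hset, List.toFinset_sort _ ((s.sort_nodup _).append (List.nodup_singleton a) hdisj)]
  exact List.pairwise_append.2 ⟨s.pairwise_sort _, List.pairwise_singleton _ _, by
    simpa using fun b hb => (h b hb).le⟩

theorem sort_eq_min'_cons {s : Finset α} (hs : s.Nonempty) :
    s.sort = s.min' hs :: (s.erase (s.min' hs)).sort := by
  conv_lhs => rw [← Finset.insert_erase (s.min'_mem hs)]
  exact Finset.sort_insert _ (fun b hb => s.min'_le b (Finset.mem_of_mem_erase hb))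
    (Finset.notMem_erase _ _)

theorem sort_eq_append_max' {s : Finset α} (hs : s.Nonempty) :
    s.sort = (s.erase (s.max' hs)).sort ++ [s.max' hs] := by
  conv_lhs => rw [← Finset.insert_erase (s.max'_mem hs)]
  exact sort_insert_of_forall_lt fun b => s.lt_max'_of_mem_erase_max' hs

variable {n : ℕ} (S : Finset (Fin n))

theorem sort_map_succEmb : (S.map (Fin.succEmb n)).sort = S.sort.map Fin.succ :=
  (S.map_sort (Fin.succEmb n) _ _ fun _ _ _ _ => Fin.succ_le_succ_iff.symm).symm

theorem sort_map_castSuccEmb : (S.map Fin.castSuccEmb).sort = S.sort.map Fin.castSucc :=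
  (S.map_sort Fin.castSuccEmb _ _ fun _ _ _ _ => Fin.castSucc_le_castSucc_iff.symm).symm

theorem sort_insert_zero_map_succEmb :
    (insert 0 (S.map (Fin.succEmb n))).sort = 0 :: S.sort.map Fin.succ := by
  rw [Finset.sort_insert _ (fun _ _ => Fin.zero_le _) (by simp [Fin.succ_ne_zero]),
    sort_map_succEmb]

theorem sort_insert_last_map_castSuccEmb :
    (insert (Fin.last n) (S.map Fin.castSuccEmb)).sort =
      S.sort.map Fin.castSucc ++ [Fin.last n] := by
  rw [sort_insert_of_forall_lt (by simp [Fin.castSucc_lt_last]), sort_map_castSuccEmb]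

end SortLemmas

section RotatedSubsets

variable {n : ℕ}

theorem map_finRotate_map_castSuccEmb (S : Finset (Fin n)) :
    (S.map Fin.castSuccEmb).map (finRotate (n + 1)).toEmbedding = S.map (Fin.succEmb n) := by
  rw [Finset.map_map]
  congr 1
  ext i
  simp

theorem map_finRotate_insert_last (S : Finset (Fin n)) :
    (insert (Fin.last n) (S.map Fin.castSuccEmb)).map (finRotate (n + 1)).toEmbedding =
      insert 0 (S.map (Fin.succEmb n)) := by
  rw [Finset.map_insert, map_finRotate_map_castSuccEmb]
  simp

theorem exists_eq_map_castSuccEmb_or_eq_insert_last (V : Finset (Fin (n + 1))) :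
    ∃ S : Finset (Fin n), V = S.map Fin.castSuccEmb ∨
      V = insert (Fin.last n) (S.map Fin.castSuccEmb) := by
  refine ⟨Finset.univ.filter fun i => i.castSucc ∈ V, ?_⟩
  by_cases h : Fin.last n ∈ V
  · right
    ext v
    cases v using Fin.lastCases <;> simp [h, Fin.castSucc_ne_last]
  · left
    ext v
    cases v using Fin.lastCases <;> simp [h, Fin.castSucc_ne_last]

variable {B : Type*}

theorem comp_finRotate_comp_castSucc (a : Fin (n + 1) → B) :
    (a ∘ finRotate (n + 1)) ∘ Fin.castSucc = a ∘ Fin.succ := by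
  ext i
  simp

theorem isRotated_map_sort_finRotate (a : Fin n → B) (V : Finset (Fin n)) :
    V.sort.map (a ∘ finRotate n) ~r (V.map (finRotate n).toEmbedding).sort.map a := by
  cases n with
  | zero => simp [Finset.eq_empty_of_isEmpty]
  | succ n =>
    have hcomp := comp_finRotate_comp_castSucc a
    obtain ⟨S, rfl | rfl⟩ := exists_eq_map_castSuccEmb_or_eq_insert_last V
    · rw [map_finRotate_map_castSuccEmb, sort_map_castSuccEmb, sort_map_succEmb, List.map_map,
        List.map_map, hcomp]
    · rw [map_finRotate_insert_last, sort_insert_last_map_castSuccEmb,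
        sort_insert_zero_map_succEmb, List.map_append, List.map_cons, List.map_map, hcomp]
      simpa using List.isRotated_concat (a 0) (S.sort.map (a ∘ Fin.succ))

end RotatedSubsets

section OrdList

variable {B : Type*} {n : ℕ}

theorem ordList_false (a : Fin n → B) : ordList a (fun _ => False) = [] := by
  simp [ordList]

variable (a : Fin (n + 1) → B) (P : Fin (n + 1) → Prop) [DecidablePred P]

theorem ordList_succ :
    ordList a P = (if P 0 then [a 0] else []) ++ ordList (a ∘ Fin.succ) fun i => P i.succ := by
  unfold ordList
  rw [List.finRange_succ, List.filter_cons]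
  split_ifs <;> simp_all [List.filter_map, Function.comp_def]

theorem ordList_succ' :
    ordList a P =
      (ordList (a ∘ Fin.castSucc) fun i => P i.castSucc) ++
        if P (Fin.last n) then [a (Fin.last n)] else [] := by
  unfold ordList
  rw [List.finRange_succ_last, List.filter_append]
  split_ifs <;> simp_all [List.filter_map, Function.comp_def]

end OrdList

section OuterGaps

variable {R : Type*} [Ring R] {n : ℕ} (a : Fin (n + 1) → R) (S : Finset (Fin n))

theorem headProd_map_succEmb :
    headProd a (S.map (Fin.succEmb n)) = a 0 * headProd (a ∘ Fin.succ) S := by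
  simp [headProd, ordList_succ]

theorem tailProd_map_castSuccEmb :
    tailProd a (S.map Fin.castSuccEmb) =
      tailProd (a ∘ Fin.castSucc) S * a (Fin.last n) := by
  simp [tailProd, ordList_succ', Fin.castSucc_lt_last]

theorem headProd_insert_zero (V : Finset (Fin (n + 1))) : headProd a (insert 0 V) = 1 := by
  simp [headProd, ordList_false]

theorem tailProd_insert_last (V : Finset (Fin (n + 1))) :
    tailProd a (insert (Fin.last n) V) = 1 := by
  simp [tailProd, (Fin.le_last _).not_gt, ordList_false]

theorem tailProd_insert_zero_map_succEmb :
    tailProd a (insert 0 (S.map (Fin.succEmb n))) = tailProd (a ∘ Fin.succ) S := by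
  simp [tailProd, ordList_succ]

theorem headProd_insert_last_map_castSuccEmb :
    headProd a (insert (Fin.last n) (S.map Fin.castSuccEmb)) =
      headProd (a ∘ Fin.castSucc) S := by
  simp [headProd, ordList_succ', Fin.castSucc_lt_last]

variable {S}

theorem tailProd_map_succEmb (hS : S.Nonempty) :
    tailProd a (S.map (Fin.succEmb n)) = tailProd (a ∘ Fin.succ) S := by
  have h : ∃ i, i ∈ S := hS
  simp [tailProd, ordList_succ, h]

theorem headProd_map_castSuccEmb (hS : S.Nonempty) :
    headProd a (S.map Fin.castSuccEmb) = headProd (a ∘ Fin.castSucc) S := by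
  have h : ∃ i, i ∈ S := hS
  simp [headProd, ordList_succ', (Fin.le_last _).not_gt, h]

end OuterGaps

section InnerGaps

variable (Ψ : A →ₗ[ℂ] ℂ) {n : ℕ} (a : Fin (n + 1) → A) (S : Finset (Fin n))

theorem gapFactor_map_succEmb :
    gapFactor Ψ a (S.map (Fin.succEmb n)) = gapFactor Ψ (a ∘ Fin.succ) S := by
  simp [gapFactor, sort_map_succEmb, ← List.map_tail, List.zip_map, Function.comp_def,
    ordList_succ]

theorem gapFactor_map_castSuccEmb :
    gapFactor Ψ a (S.map Fin.castSuccEmb) = gapFactor Ψ (a ∘ Fin.castSucc) S := by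
  simp [gapFactor, sort_map_castSuccEmb, ← List.map_tail, List.zip_map, Function.comp_def,
    ordList_succ', (Fin.le_last _).not_gt]

variable {S}

theorem gapFactor_insert_zero_map_succEmb (hS : S.Nonempty) :
    gapFactor Ψ a (insert 0 (S.map (Fin.succEmb n))) =
      Ψ (headProd (a ∘ Fin.succ) S) * gapFactor Ψ (a ∘ Fin.succ) S := by
  have hgap : ordList a (fun i => 0 < i ∧ i < (S.min' hS).succ) =
      ordList (a ∘ Fin.succ) fun i => ∀ v ∈ S, i < v := by
    simp [ordList_succ]
  rw [← gapFactor_map_succEmb, gapFactor, gapFactor, sort_insert_zero_map_succEmb,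
    sort_map_succEmb, sort_eq_min'_cons hS, headProd, ← hgap]
  simp only [List.map_cons, List.tail_cons, List.zip_cons_cons, List.prod_cons]

theorem gapFactor_insert_last_map_castSuccEmb (hS : S.Nonempty) :
    gapFactor Ψ a (insert (Fin.last n) (S.map Fin.castSuccEmb)) =
      gapFactor Ψ (a ∘ Fin.castSucc) S * Ψ (tailProd (a ∘ Fin.castSucc) S) := by
  have hgap : ordList a (fun i => (S.max' hS).castSucc < i ∧ i < Fin.last n) =
      ordList (a ∘ Fin.castSucc) fun i => ∀ v ∈ S, v < i := by
    simp [ordList_succ', Fin.castSucc_lt_last]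
  rw [← gapFactor_map_castSuccEmb, gapFactor, gapFactor, sort_insert_last_map_castSuccEmb,
    sort_map_castSuccEmb, sort_eq_append_max' hS, tailProd, ← hgap]
  simp only [List.map_append, List.map_cons, List.map_nil, List.append_assoc, List.cons_append,
    List.nil_append, zip_tail_append_pair, List.prod_append, List.prod_cons, List.prod_nil,
    mul_one]

end InnerGaps

/-- The product of the `Ψ`-moments of all cyclic gaps of the block `V`: the weight of
`Dκ^Ψ(a|V)` once the non-crossing partitions with distinguished block `V` are summed over. The gap
that wraps around is read in cyclic order, from the end of the word to its beginning. -/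
noncomputable def cycGapFactor {n : ℕ} (Ψ : A →ₗ[ℂ] ℂ) (a : Fin n → A) (V : Finset (Fin n)) :
    ℂ :=
  Ψ (tailProd a V * headProd a V) * gapFactor Ψ a V

section CyclicGaps

variable (Ψ : A →ₗ[ℂ] ℂ) {n : ℕ}

theorem cycGapFactor_comp_finRotate_map_castSuccEmb (a : Fin (n + 1) → A)
    {S : Finset (Fin n)} (hS : S.Nonempty) :
    cycGapFactor Ψ (a ∘ finRotate (n + 1)) (S.map Fin.castSuccEmb) =
      cycGapFactor Ψ a (S.map (Fin.succEmb n)) := by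
  rw [cycGapFactor, cycGapFactor, tailProd_map_castSuccEmb, headProd_map_castSuccEmb _ hS,
    gapFactor_map_castSuccEmb, comp_finRotate_comp_castSucc, tailProd_map_succEmb _ hS,
    headProd_map_succEmb, gapFactor_map_succEmb, mul_assoc (tailProd _ _), Function.comp_apply,
    finRotate_last]

theorem cycGapFactor_comp_finRotate_insert_last (a : Fin (n + 1) → A)
    (S : Finset (Fin n)) :
    cycGapFactor Ψ (a ∘ finRotate (n + 1)) (insert (Fin.last n) (S.map Fin.castSuccEmb)) =
      cycGapFactor Ψ a (insert 0 (S.map (Fin.succEmb n))) := by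
  rw [cycGapFactor, cycGapFactor, tailProd_insert_last, headProd_insert_last_map_castSuccEmb,
    tailProd_insert_zero_map_succEmb, headProd_insert_zero, comp_finRotate_comp_castSucc,
    one_mul, mul_one]
  rcases S.eq_empty_or_nonempty with rfl | hS
  · simp [gapFactor, tailProd, headProd]
  · rw [gapFactor_insert_last_map_castSuccEmb _ _ hS, gapFactor_insert_zero_map_succEmb _ _ hS,
      comp_finRotate_comp_castSucc]
    ring

theorem cycGapFactor_comp_finRotate (a : Fin n → A) {V : Finset (Fin n)} (hV : V.Nonempty) :
    cycGapFactor Ψ (a ∘ finRotate n) V =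
      cycGapFactor Ψ a (V.map (finRotate n).toEmbedding) := by
  cases n with
  | zero => simp
  | succ n =>
    obtain ⟨S, rfl | rfl⟩ := exists_eq_map_castSuccEmb_or_eq_insert_last V
    · rw [map_finRotate_map_castSuccEmb,
        cycGapFactor_comp_finRotate_map_castSuccEmb Ψ a (by simpa using hV)]
    · rw [map_finRotate_insert_last, cycGapFactor_comp_finRotate_insert_last]

end CyclicGaps

theorem IsTracial.map_prod_rotate_one {ω : A →ₗ[ℂ] ℂ} (hω : IsTracial ω) (l : List A) :
    ω (l.rotate 1).prod = ω l.prod := by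
  cases l with
  | nil => rfl
  | cons x l => simpa using hω l.prod x

theorem cumulAux_two_succ_ofFn (Ψ θ : A →ₗ[ℂ] ℂ) (fuel : ℕ) {n : ℕ} (a : Fin n → A) :
    cumulAux Ψ θ 2 (fuel + 1) (List.ofFn a) =
      θ (List.ofFn a).prod - ∑ V : Finset (Fin n),
        if V.Nonempty ∧ V ≠ Finset.univ then
          cumulAux Ψ θ 2 fuel (V.sort.map a) * cycGapFactor Ψ a V
        else 0 := by
  obtain ⟨l, hl⟩ : ∃ l, l = List.ofFn a := ⟨_, rfl⟩
  have hlen : l.length = n := by simp [hl]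
  subst hlen
  have ha : a = l.get := List.ofFn_injective (by rw [← hl, List.ofFn_get])
  rw [← hl, ha, cumulAux]
  simp [cycGapFactor, mul_assoc]

theorem cumulAux_two_eq_of_isRotated (Ψ : A →ₗ[ℂ] ℂ) {θ : A →ₗ[ℂ] ℂ} (hθ : IsTracial θ)
    (fuel : ℕ) {l l' : List A} (h : l ~r l') :
    cumulAux Ψ θ 2 fuel l = cumulAux Ψ θ 2 fuel l' := by
  induction fuel generalizing l l' with
  | zero => rfl
  | succ fuel ih =>
    refine eq_of_isRotated_of_forall_rotate_one (fun l => ?_) h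
    obtain ⟨n, a, rfl⟩ : ∃ (n : ℕ) (a : Fin n → A), l = List.ofFn a :=
      ⟨l.length, l.get, (List.ofFn_get l).symm⟩
    rw [← ofFn_comp_finRotate, cumulAux_two_succ_ofFn, cumulAux_two_succ_ofFn,
      ofFn_comp_finRotate, hθ.map_prod_rotate_one]
    congr 1
    refine Fintype.sum_equiv (finRotate n).finsetCongr _ _ fun V => ?_
    have huniv : V.map (finRotate n).toEmbedding = Finset.univ ↔ V = Finset.univ := by
      rw [← Finset.map_univ_equiv (finRotate n), Finset.map_inj, Finset.map_univ_equiv]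
    simp only [Equiv.finsetCongr_apply, Finset.map_nonempty, ne_eq, huniv]
    refine ite_congr rfl (fun hV => ?_) fun _ => rfl
    rw [ih (isRotated_map_sort_finRotate a V), cycGapFactor_comp_finRotate Ψ a hV.1]

theorem cycCumulant_cyclic_invariant_general (Ψ : A →ₗ[ℂ] ℂ) {dΨ : A →ₗ[ℂ] ℂ}
    (htr : IsTracial dΨ) {l l' : List A} (h : l ~r l') :
    cycCumulant Ψ dΨ l = cycCumulant Ψ dΨ l' := by
  rw [cycCumulant, cycCumulant, h.perm.length_eq, cumulAux_two_eq_of_isRotated Ψ htr _ h]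

/-- cyclic invariance of the cyclic free cumulants. -/
theorem cycCumulant_cyclic_invariant
    {A : Type*} [Ring A] [Algebra ℂ A]
    (Ψ dΨ : A →ₗ[ℂ] ℂ) (hΨ1 : Ψ 1 = 1)
    (htr : IsTracial dΨ) (hd1 : dΨ 1 = 0)
    (x : A) (l : List A) :
    cycCumulant Ψ dΨ (x :: l) = cycCumulant Ψ dΨ (l ++ [x]) :=
  cycCumulant_cyclic_invariant_general Ψ htr (List.isRotated_concat x l).symm

end NCProb
end

section
/- Let A be a complex algebra equipped with a linear functional φ : A → ℂ, and let A₁, A₂ ⊆ A be two subalgebras which are Boolean independent with respect to φ (i.e. φ(a₁⋯aₙ) = φ(a₁)⋯φ(aₙ) for every alternating sequence of elements of A₁ ∪ A₂). Then T₀(A₁) and T₀(A₂) are cyclically Boolean independent subalgebras of the augmentation ideal of T(A) with respect to (φ, [φ]). -/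
open scoped BigOperators

namespace NCProb

variable {A : Type*} [Ring A] [Algebra ℂ A]

/-- Boolean independence of two (non-unital) subalgebras, given as sets. -/
def IsBooleanIndep {A : Type*} [Ring A] [Algebra ℂ A]
    (φ : A →ₗ[ℂ] ℂ) (S₁ S₂ : Set A) : Prop :=
  ∀ (n : ℕ) (a : Fin n → A) (j : Fin n → Bool),
    Alternates S₁ S₂ a j → φ (List.ofFn a).prod = ∏ i, φ (a i)

/-- Cyclic Boolean independence with respect to the pair `(φ, ω)`. -/
def IsCycBooleanIndep {A : Type*} [Ring A] [Algebra ℂ A]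
    (φ ω : A →ₗ[ℂ] ℂ) (S₁ S₂ : Set A) : Prop :=
  IsBooleanIndep φ S₁ S₂ ∧
    ∀ (n : ℕ) (a : Fin n → A) (j : Fin n → Bool) (hn : 2 ≤ n),
      Alternates S₁ S₂ a j →
      j ⟨0, by omega⟩ ≠ j ⟨n - 1, by omega⟩ →
      ω (List.ofFn a).prod = φ (List.ofFn a).prod

/-!
By multilinearity everything reduces to tensors `w = c₁ ⊗ ⋯ ⊗ cₙ` of letters labelled by the
algebra, `A₁` or `A₂`, they come from, and on these `φ` is composed with the multiplication
homomorphism `T(A) → A`. Place `w` on a circle: `[φ](w)` is the sum, over all nonempty sets `V` of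
places where a block starts, of the products of the Boolean cumulants of the resulting blocks. If
`1 ∈ V`, the blocks form an interval partition of the linear word, and the sum over these `V` is
`φ(c₁⋯cₙ)` by the moment-cumulant formula. If `1 ∉ V`, one of the blocks contains `cₙ` followed by
`c₁`. The labels of these two differ, so moments factorize between them by Boolean independence,
whence the Boolean cumulant of that block vanishes.
-/

section BooleanCumulants

lemma booleanAux_succ_eq (φ : A →ₗ[ℂ] ℂ) {fuel : ℕ} {l : List A} (hl : l ≠ [])
    (hfuel : l.length ≤ fuel) : booleanAux φ (fuel + 1) l = booleanAux φ fuel l := by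
  induction fuel generalizing l with
  | zero => exact absurd (List.length_eq_zero_iff.1 (Nat.le_zero.1 hfuel)) hl
  | succ fuel ih =>
    rw [booleanAux, booleanAux]
    refine congrArg (φ l.prod - ·) (Finset.sum_congr rfl fun k hk => ?_)
    rw [Finset.mem_range] at hk
    rw [ih (by simpa using hl) (by rw [List.length_take]; omega)]

lemma booleanAux_eq_booleanCumulant (φ : A →ₗ[ℂ] ℂ) {fuel : ℕ} {l : List A} (hl : l ≠ [])
    (hfuel : l.length ≤ fuel) : booleanAux φ fuel l = booleanCumulant φ l := by
  induction fuel, hfuel using Nat.le_induction with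
  | base => rfl
  | succ fuel hfuel ih => rw [booleanAux_succ_eq φ hl hfuel, ih]

lemma map_prod_eq_booleanCumulant_add_sum (φ : A →ₗ[ℂ] ℂ) {l : List A} (hl : l ≠ []) :
    φ l.prod = booleanCumulant φ l +
      ∑ k ∈ Finset.Ico 1 l.length, booleanCumulant φ (l.take k) * φ (l.drop k).prod := by
  obtain ⟨m, hm⟩ : ∃ m, l.length = m + 1 :=
    Nat.exists_eq_succ_of_ne_zero (List.length_pos_iff.2 hl).ne'
  have hsum : ∑ k ∈ Finset.Ico 1 l.length, booleanCumulant φ (l.take k) * φ (l.drop k).prod =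
      ∑ k ∈ Finset.range m, booleanAux φ m (l.take (k + 1)) * φ (l.drop (k + 1)).prod := by
    rw [hm, Finset.sum_Ico_eq_sum_range]
    refine Finset.sum_congr rfl fun k hk => ?_
    rw [Finset.mem_range] at hk
    rw [add_comm 1 k, booleanAux_eq_booleanCumulant φ (by simpa using hl)
      (by rw [List.length_take]; omega)]
  rw [hsum, booleanCumulant, hm, booleanAux, hm, Nat.add_sub_cancel, sub_add_cancel]

lemma map_prod_append_eq_booleanCumulant_add_sum (φ : A →ₗ[ℂ] ℂ) {u : List A} (hu : u ≠ [])
    (v : List A) :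
    φ (u ++ v).prod = booleanCumulant φ (u ++ v) +
      (∑ k ∈ Finset.Ico 1 u.length, booleanCumulant φ (u.take k) * φ (u.drop k ++ v).prod +
        ∑ k ∈ Finset.range v.length, booleanCumulant φ (u ++ v.take k) * φ (v.drop k).prod) := by
  rw [map_prod_eq_booleanCumulant_add_sum φ (List.append_ne_nil_of_left_ne_nil hu v),
    List.length_append,
    ← Finset.sum_Ico_consecutive _ (Nat.succ_le_of_lt (List.length_pos_iff.2 hu))
      (Nat.le_add_right _ _), Finset.sum_Ico_eq_sum_range _ u.length, Nat.add_sub_cancel_left]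
  congr 2
  · refine Finset.sum_congr rfl fun k hk => ?_
    have hk := (Finset.mem_Ico.1 hk).2.le
    rw [List.take_append_of_le_length hk, List.drop_append_of_le_length hk]
  · refine Finset.sum_congr rfl fun k _ => ?_
    rw [List.take_length_add_append, List.drop_length_add_append]

/-- The cuts of `u ++ v` inside `u` and at its end already add up to `φ(u)φ(v)`, and those inside
`v` vanish by induction, which leaves nothing for the cumulant of `u ++ v` itself. -/
theorem booleanCumulant_append_eq_zero (φ : A →ₗ[ℂ] ℂ) {u v : List A} (hu : u ≠ []) (hv : v ≠ [])
    (hfac : ∀ i k, φ (u.drop i ++ v.take k).prod = φ (u.drop i).prod * φ (v.take k).prod) :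
    booleanCumulant φ (u ++ v) = 0 := by
  induction hn : v.length using Nat.strong_induction_on generalizing v with
  | _ n ih =>
    subst hn
    have hfac_v (i : ℕ) : φ (u.drop i ++ v).prod = φ (u.drop i).prod * φ v.prod := by
      simpa only [List.take_length] using hfac i v.length
    have hcut_v : ∑ k ∈ Finset.range v.length,
        booleanCumulant φ (u ++ v.take k) * φ (v.drop k).prod =
          booleanCumulant φ u * φ v.prod := by
      rw [Finset.sum_eq_single_of_mem 0 (Finset.mem_range.2 (List.length_pos_iff.2 hv)),
        List.take_zero, List.drop_zero, List.append_nil]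
      intro k hk hk0
      rw [Finset.mem_range] at hk
      rw [ih (v.take k).length (by rwa [List.length_take_of_le hk.le]) (by simp [hk0, hv])
        (fun i r => by rw [List.take_take]; exact hfac i _) rfl, zero_mul]
    have hmoment := map_prod_append_eq_booleanCumulant_add_sum φ hu v
    have hfac_u : φ (u ++ v).prod = φ u.prod * φ v.prod := hfac_v 0
    simp_rw [hfac_v, ← mul_assoc] at hmoment
    rw [hcut_v, ← Finset.sum_mul, ← add_mul, add_comm (∑ k ∈ _, _),
      ← map_prod_eq_booleanCumulant_add_sum φ hu, hfac_u] at hmoment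
    exact right_eq_add.1 hmoment

end BooleanCumulants

section IntervalPartitions

lemma sum_powerset_eq_add_sum_insert_filter_lt {ι M : Type*} [LinearOrder ι] [AddCommMonoid M]
    (U : Finset ι) (f : Finset ι → M) :
    ∑ S ∈ U.powerset, f S =
      f ∅ + ∑ k ∈ U, ∑ S ∈ {i ∈ U | k < i}.powerset, f (insert k S) := by
  induction U using Finset.induction_on_min with
  | empty => simp
  | insert a s ha ih =>
    have ha_notMem : a ∉ s := fun h => lt_irrefl a (ha a h)
    have hfilter_a : {i ∈ insert a s | a < i} = s := by
      rw [Finset.filter_insert, if_neg (lt_irrefl a), Finset.filter_true_of_mem ha]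
    have hfilter : ∑ k ∈ s, ∑ S ∈ {i ∈ insert a s | k < i}.powerset, f (insert k S) =
        ∑ k ∈ s, ∑ S ∈ {i ∈ s | k < i}.powerset, f (insert k S) :=
      Finset.sum_congr rfl fun k hk => by
        rw [Finset.filter_insert, if_neg (ha k hk).not_gt]
    rw [Finset.sum_powerset_insert ha_notMem, Finset.sum_insert ha_notMem, hfilter_a, hfilter, ih]
    abel

lemma sort_insert_of_subset_Ioi {n : ℕ} {m : Fin n} {S : Finset (Fin n)} (hS : S ⊆ Finset.Ioi m) :
    (insert m S).sort (· ≤ ·) = m :: S.sort (· ≤ ·) :=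
  Finset.sort_insert _ (fun _ hi => (Finset.mem_Ioi.1 (hS hi)).le)
    fun h => lt_irrefl m (Finset.mem_Ioi.1 (hS h))

lemma ordList_eq_drop_take {α : Type*} {n : ℕ} (a : Fin n → α) (P : Fin n → Prop)
    [DecidablePred P] (m k : ℕ) (hP : ∀ i : Fin n, P i ↔ m ≤ i ∧ i < k) :
    ordList a P = ((List.ofFn a).take k).drop m := by
  have hfilter : ((List.finRange n).filter fun i => decide (P i)) =
      ((List.finRange n).take k).drop m := by
    have hsorted := (List.sortedLT_finRange n).pairwise
    refine (hsorted.filter _).eq_of_mem_iff ((hsorted.take).drop) fun i => ?_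
    simp only [List.mem_filter, List.mem_finRange, hP, List.mem_drop_iff_getElem,
      List.getElem_take, List.getElem_finRange, List.length_take, List.length_finRange,
      Bool.decide_and, Bool.and_eq_true, decide_eq_true_eq, true_and, Fin.cast_mk, lt_inf_iff]
    constructor
    · rintro ⟨hm, hk⟩
      exact ⟨i - m, by omega, Fin.ext (Nat.add_sub_cancel' hm)⟩
    · rintro ⟨j, hj, rfl⟩
      exact ⟨Nat.le_add_right m j, (add_comm m j).trans_lt hj.1⟩
  rw [ordList, hfilter, List.ofFn_eq_map, List.map_drop, List.map_take]

/-- For `V = {i₁ < ⋯ < i_ℓ}`, the product of the Boolean cumulants of the intervals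
`[i₁, i₂), …, [i_{ℓ-1}, i_ℓ), [i_ℓ, n)` of letters of `a`. -/
noncomputable def intervalWeight (φ : A →ₗ[ℂ] ℂ) {n : ℕ} (a : Fin n → A)
    (V : Finset (Fin n)) : ℂ :=
  (((V.sort (· ≤ ·)).zip (V.sort (· ≤ ·)).tail).map fun p =>
      booleanCumulant φ (ordList a fun i => p.1 ≤ i ∧ i < p.2)).prod *
    booleanCumulant φ (ordList a fun i => ∀ v ∈ V, v ≤ i)

lemma intervalWeight_singleton (φ : A →ₗ[ℂ] ℂ) {n : ℕ} (a : Fin n → A) (m : Fin n) :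
    intervalWeight φ a {m} = booleanCumulant φ ((List.ofFn a).drop m) := by
  rw [intervalWeight, ordList_eq_drop_take a _ m n (by simp),
    List.take_of_length_le (List.length_ofFn).le]
  simp

lemma intervalWeight_insert_insert (φ : A →ₗ[ℂ] ℂ) {n : ℕ} (a : Fin n → A) {m k : Fin n}
    (hmk : m < k) {S : Finset (Fin n)} (hS : S ⊆ Finset.Ioi k) :
    intervalWeight φ a (insert m (insert k S)) =
      booleanCumulant φ (((List.ofFn a).drop m).take (k - m)) *
        intervalWeight φ a (insert k S) := by
  have hkS : insert k S ⊆ Finset.Ioi m :=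
    Finset.insert_subset (Finset.mem_Ioi.2 hmk) (hS.trans (Finset.Ioi_subset_Ioi hmk.le))
  have hlast : (ordList a fun i => ∀ v ∈ insert m (insert k S), v ≤ i) =
      ordList a fun i => ∀ v ∈ insert k S, v ≤ i := by
    simp only [ordList]
    congr! 4 with i
    simp only [Finset.forall_mem_insert]
    exact ⟨And.right, fun h => ⟨hmk.le.trans h.1, h⟩⟩
  rw [intervalWeight, intervalWeight, hlast, sort_insert_of_subset_Ioi hkS,
    sort_insert_of_subset_Ioi hS, List.tail_cons, List.tail_cons, List.zip_cons_cons,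
    List.map_cons, List.prod_cons, mul_assoc,
    ordList_eq_drop_take a (fun i => m ≤ i ∧ i < k) m k (fun _ => Iff.rfl), List.drop_take]

lemma sum_Ioi_val_eq_sum_Ico {M : Type*} [AddCommMonoid M] {n : ℕ} (m : Fin n) (g : ℕ → M) :
    ∑ k ∈ Finset.Ioi m, g k = ∑ j ∈ Finset.Ico 1 (n - m), g (m + j) := by
  rw [Finset.sum_Ico_add, Nat.sub_add_cancel m.is_lt.le, add_comm 1]
  exact (Finset.sum_map _ Fin.valEmbedding g).symm.trans (by rw [Fin.map_valEmbedding_Ioi]; rfl)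

theorem sum_intervalWeight_insert (φ : A →ₗ[ℂ] ℂ) {n : ℕ} (a : Fin n → A) (m : Fin n) :
    ∑ S ∈ (Finset.Ioi m).powerset, intervalWeight φ a (insert m S) =
      φ ((List.ofFn a).drop m).prod := by
  induction m using WellFoundedGT.induction with
  | ind m ih =>
    have hfilter : ∀ k ∈ Finset.Ioi m, {i ∈ Finset.Ioi m | k < i} = Finset.Ioi k := by
      intro k hk
      ext i
      simpa using (Finset.mem_Ioi.1 hk).trans
    have hsum : ∀ k ∈ Finset.Ioi m, ∑ S ∈ {i ∈ Finset.Ioi m | k < i}.powerset,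
          intervalWeight φ a (insert m (insert k S)) =
        booleanCumulant φ (((List.ofFn a).drop m).take (k - m)) *
          φ ((List.ofFn a).drop k).prod := by
      intro k hk
      rw [hfilter k hk, ← ih k (Finset.mem_Ioi.1 hk), Finset.mul_sum]
      exact Finset.sum_congr rfl fun S hS =>
        intervalWeight_insert_insert φ a (Finset.mem_Ioi.1 hk) (Finset.mem_powerset.1 hS)
    have hne : (List.ofFn a).drop m ≠ [] := by simp
    rw [sum_powerset_eq_add_sum_insert_filter_lt, insert_empty_eq, intervalWeight_singleton,
      Finset.sum_congr rfl hsum, map_prod_eq_booleanCumulant_add_sum φ hne,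
      sum_Ioi_val_eq_sum_Ico m fun k => booleanCumulant φ (((List.ofFn a).drop m).take (k - m)) *
          φ ((List.ofFn a).drop k).prod, List.length_drop, List.length_ofFn]
    simp only [Nat.add_sub_cancel_left, List.drop_drop]

lemma exists_ordList_append_ordList_eq_drop_append_take {α : Type*} {n : ℕ} (a : Fin n → α)
    {m : Fin n} {S : Finset (Fin n)} (hS : S ⊆ Finset.Ioi m) :
    ∃ k : Fin n, ((ordList a fun i => ∀ v ∈ insert m S, v ≤ i) ++
      ordList a fun i => ∀ v ∈ insert m S, i < v) =
        (List.ofFn a).drop k ++ (List.ofFn a).take m := by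
  have hV : (insert m S).Nonempty := Finset.insert_nonempty m S
  refine ⟨(insert m S).max' hV, ?_⟩
  rw [ordList_eq_drop_take a _ ((insert m S).max' hV) n,
    ordList_eq_drop_take a _ 0 m, List.drop_zero, List.take_of_length_le (List.length_ofFn).le]
  · intro i
    rw [Finset.forall_mem_insert]
    exact ⟨fun h => ⟨Nat.zero_le _, h.1⟩,
      fun h => ⟨h.2, fun v hv => (Fin.lt_def.2 h.2).trans (Finset.mem_Ioi.1 (hS hv))⟩⟩
  · intro i
    rw [← Finset.max'_le_iff _ hV]
    exact ⟨fun h => ⟨h, i.is_lt⟩, And.left⟩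

lemma ordList_forall_lt_eq_nil {α : Type*} {n : ℕ} [NeZero n] (a : Fin n → α)
    {V : Finset (Fin n)} (hV : 0 ∈ V) : (ordList a fun i => ∀ v ∈ V, i < v) = [] := by
  rw [ordList_eq_drop_take a _ 0 0, List.take_zero, List.drop_zero]
  exact fun i => ⟨fun h => absurd (h 0 hV) (Fin.zero_le i).not_gt,
    fun h => absurd h.2 i.val.not_lt_zero⟩

theorem mkValue_eq_map_prod (φ : A →ₗ[ℂ] ℂ) {n : ℕ} (hn : 0 < n) (a : Fin n → A)
    (hwrap : ∀ m k, 0 < m → k < n →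
      booleanCumulant φ ((List.ofFn a).drop k ++ (List.ofFn a).take m) = 0) :
    mkValue φ a = φ (List.ofFn a).prod := by
  have : NeZero n := ⟨hn.ne'⟩
  have hfilter (k : Fin n) : ({i | k < i} : Finset (Fin n)) = Finset.Ioi k := by ext; simp
  rw [mkValue, ← Finset.powerset_univ, sum_powerset_eq_add_sum_insert_filter_lt,
    if_neg Finset.not_nonempty_empty, zero_add]
  simp only [Finset.insert_nonempty, if_true, hfilter]
  rw [Finset.sum_eq_single_of_mem (0 : Fin n) (Finset.mem_univ _)]
  · rw [← List.drop_zero (l := List.ofFn a), ← Fin.val_zero n, ← sum_intervalWeight_insert]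
    refine Finset.sum_congr rfl fun S _ => ?_
    rw [ordList_forall_lt_eq_nil a (Finset.mem_insert_self 0 S), List.append_nil, intervalWeight]
  · refine fun m _ hm => Finset.sum_eq_zero fun S hS => ?_
    obtain ⟨k, hk⟩ := exists_ordList_append_ordList_eq_drop_append_take a (Finset.mem_powerset.1 hS)
    rw [hk, hwrap m k (Fin.pos_iff_ne_zero.2 hm) k.is_lt, mul_zero]

end IntervalPartitions

section MergeRuns

variable {ι S : Type*} [DecidableEq ι] [Mul S]

/-- Prepends a labelled letter to a labelled word, multiplying it into the first letter if the two
labels agree. -/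
def mergeCons (p : ι × S) : List (ι × S) → List (ι × S)
  | [] => [p]
  | q :: M => if p.1 = q.1 then (p.1, p.2 * q.2) :: M else p :: q :: M

/-- Multiplies out the maximal runs of equal labels in a labelled word, so that neighbouring labels
differ in the result. -/
def mergeRuns (L : List (ι × S)) : List (ι × S) :=
  L.foldr mergeCons []

lemma mergeRuns_cons (p : ι × S) (L : List (ι × S)) :
    mergeRuns (p :: L) = mergeCons p (mergeRuns L) :=
  rfl

lemma exists_mergeCons_eq_cons (p : ι × S) (M : List (ι × S)) :
    ∃ s M', mergeCons p M = (p.1, s) :: M' := by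
  cases M with
  | nil => exact ⟨p.2, [], rfl⟩
  | cons q M =>
    rw [mergeCons]
    split_ifs
    exacts [⟨_, _, rfl⟩, ⟨_, _, rfl⟩]

lemma mergeCons_append (p : ι × S) {M : List (ι × S)} (hM : M ≠ []) (N : List (ι × S)) :
    mergeCons p (M ++ N) = mergeCons p M ++ N := by
  obtain ⟨q, M, rfl⟩ := List.exists_cons_of_ne_nil hM
  simp only [List.cons_append, mergeCons]
  split_ifs <;> rfl

lemma mergeCons_eq_cons {p : ι × S} {M : List (ι × S)} (h : ∀ q ∈ M.head?, p.1 ≠ q.1) :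
    mergeCons p M = p :: M := by
  cases M with
  | nil => rfl
  | cons q M => exact if_neg (h q rfl)

lemma prod_map_snd_mergeCons {R : Type*} [Monoid R] (p : ι × R) (M : List (ι × R)) :
    ((mergeCons p M).map Prod.snd).prod = p.2 * (M.map Prod.snd).prod := by
  cases M with
  | nil => rfl
  | cons q M =>
    rw [mergeCons]
    split_ifs <;> simp only [List.map_cons, List.prod_cons, mul_assoc]

lemma prod_map_snd_mergeRuns {R : Type*} [Monoid R] (L : List (ι × R)) :
    ((mergeRuns L).map Prod.snd).prod = (L.map Prod.snd).prod := by
  induction L with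
  | nil => rfl
  | cons p L ih => rw [mergeRuns_cons, prod_map_snd_mergeCons, ih, List.map_cons, List.prod_cons]

lemma isChain_mergeCons (p : ι × S) {M : List (ι × S)} (hM : M.IsChain fun p q => p.1 ≠ q.1) :
    (mergeCons p M).IsChain fun p q => p.1 ≠ q.1 := by
  cases M with
  | nil => exact List.isChain_singleton p
  | cons q M =>
    rw [mergeCons]
    split_ifs with hpq
    · rw [List.isChain_cons] at hM ⊢
      exact ⟨fun r hr => hpq.trans_ne (hM.1 r hr), hM.2⟩
    · exact hM.cons_cons hpq

lemma isChain_mergeRuns (L : List (ι × S)) :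
    (mergeRuns L).IsChain fun p q => p.1 ≠ q.1 := by
  induction L with
  | nil => exact List.isChain_nil
  | cons p L ih => exact isChain_mergeCons p ih

lemma snd_mem_of_mem_mergeRuns {σ : Type*} [SetLike σ S] [MulMemClass σ S] {B : ι → σ}
    {L : List (ι × S)} (hL : ∀ p ∈ L, p.2 ∈ B p.1) : ∀ p ∈ mergeRuns L, p.2 ∈ B p.1 := by
  induction L with
  | nil => exact hL
  | cons p L ih =>
    obtain ⟨hp, hL⟩ := List.forall_mem_cons.1 hL
    rw [mergeRuns_cons]
    rcases hLM : mergeRuns L with _ | ⟨q, M⟩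
    · simpa only [mergeCons, List.forall_mem_singleton] using hp
    · obtain ⟨hq, hM⟩ := List.forall_mem_cons.1 (hLM ▸ ih hL)
      rw [mergeCons]
      split_ifs with hpq
      · exact List.forall_mem_cons.2 ⟨mul_mem hp (hpq ▸ hq), hM⟩
      · exact List.forall_mem_cons.2 ⟨hp, List.forall_mem_cons.2 ⟨hq, hM⟩⟩

lemma mergeRuns_append {u v : List (ι × S)} (huv : ∀ p ∈ u.getLast?, ∀ q ∈ v.head?, p.1 ≠ q.1) :
    mergeRuns (u ++ v) = mergeRuns u ++ mergeRuns v := by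
  induction u with
  | nil => rfl
  | cons p u ih =>
    rw [List.cons_append, mergeRuns_cons, mergeRuns_cons]
    rcases u with _ | ⟨r, u⟩
    · refine mergeCons_eq_cons fun q hq => ?_
      rcases v with _ | ⟨q', v⟩
      · exact absurd hq (Option.not_mem_none q)
      · obtain ⟨s, M, hM⟩ := exists_mergeCons_eq_cons q' (mergeRuns v)
        rw [List.nil_append, mergeRuns_cons, hM, List.head?_cons, Option.mem_some] at hq
        subst hq
        exact huv p rfl q' rfl
    · have hne : mergeRuns (r :: u) ≠ [] := by
        obtain ⟨s, M, hM⟩ := exists_mergeCons_eq_cons r (mergeRuns u)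
        rw [mergeRuns_cons, hM]
        exact List.cons_ne_nil _ _
      rw [ih (by rwa [List.getLast?_cons_cons] at huv), mergeCons_append p hne]

end MergeRuns

section LabelledWords

lemma mem_ite_coe_iff {α σ : Type*} [SetLike σ α] {C₁ C₂ : σ} (b : Bool) {x : α} :
    x ∈ (if b then (C₂ : Set α) else C₁) ↔ x ∈ if b then C₂ else C₁ := by
  cases b <;> rfl

/-- A word in `A₁ ∪ A₂`, each letter being labelled by the algebra it is taken from: `false` for
`A₁` and `true` for `A₂`, as in `Alternates`. -/
def IsLabelledWord (A₁ A₂ : NonUnitalSubalgebra ℂ A) (L : List (Bool × A)) : Prop :=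
  ∀ p ∈ L, p.2 ∈ if p.1 then A₂ else A₁

variable {φ : A →ₗ[ℂ] ℂ} {A₁ A₂ : NonUnitalSubalgebra ℂ A}
  {L u v : List (Bool × A)}

lemma IsLabelledWord.subset (hL : IsLabelledWord A₁ A₂ L) (hu : u ⊆ L) :
    IsLabelledWord A₁ A₂ u :=
  fun p hp => hL p (hu hp)

lemma IsLabelledWord.append (hu : IsLabelledWord A₁ A₂ u) (hv : IsLabelledWord A₁ A₂ v) :
    IsLabelledWord A₁ A₂ (u ++ v) :=
  List.forall_mem_append.2 ⟨hu, hv⟩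

lemma IsLabelledWord.mergeRuns (hL : IsLabelledWord A₁ A₂ L) :
    IsLabelledWord A₁ A₂ (mergeRuns L) :=
  snd_mem_of_mem_mergeRuns (B := fun b : Bool => if b then A₂ else A₁) hL

lemma IsBooleanIndep.map_prod_of_isChain (hφ : IsBooleanIndep φ (A₁ : Set A) A₂)
    (hL : IsLabelledWord A₁ A₂ L) (hchain : L.IsChain fun p q => p.1 ≠ q.1) :
    φ (L.map Prod.snd).prod = (L.map fun p => φ p.2).prod := by
  have halt : Alternates (A₁ : Set A) A₂ (fun i => L[(i : ℕ)].2) (fun i => L[(i : ℕ)].1) :=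
    ⟨fun i => (mem_ite_coe_iff _).2 (hL _ (List.getElem_mem i.is_lt)),
      fun i hi => List.isChain_iff_getElem.1 hchain i hi⟩
  have h := hφ L.length _ _ halt
  rwa [← List.prod_ofFn, List.ofFn_getElem_eq_map L Prod.snd,
    List.ofFn_getElem_eq_map L fun p => φ p.2] at h

/-- Multiplying out runs of equal labels turns both factors into alternating words, and these
concatenate to an alternating word. -/
lemma IsBooleanIndep.map_prod_append (hφ : IsBooleanIndep φ (A₁ : Set A) A₂)
    (hu : IsLabelledWord A₁ A₂ u) (hv : IsLabelledWord A₁ A₂ v)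
    (huv : ∀ p ∈ u.getLast?, ∀ q ∈ v.head?, p.1 ≠ q.1) :
    φ (u.map Prod.snd ++ v.map Prod.snd).prod =
      φ (u.map Prod.snd).prod * φ (v.map Prod.snd).prod := by
  have hmap {w : List (Bool × A)} (hw : IsLabelledWord A₁ A₂ w) :
      φ (w.map Prod.snd).prod = ((mergeRuns w).map fun p => φ p.2).prod := by
    rw [← prod_map_snd_mergeRuns, hφ.map_prod_of_isChain hw.mergeRuns (isChain_mergeRuns w)]
  rw [← List.map_append, hmap (hu.append hv), mergeRuns_append huv, List.map_append,
    List.prod_append, hmap hu, hmap hv]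

lemma IsBooleanIndep.booleanCumulant_append_eq_zero (hφ : IsBooleanIndep φ (A₁ : Set A) A₂)
    (hu : IsLabelledWord A₁ A₂ u) (hv : IsLabelledWord A₁ A₂ v) (hu_ne : u ≠ []) (hv_ne : v ≠ [])
    (huv : ∀ p ∈ u.getLast?, ∀ q ∈ v.head?, p.1 ≠ q.1) :
    booleanCumulant φ (u.map Prod.snd ++ v.map Prod.snd) = 0 := by
  refine NCProb.booleanCumulant_append_eq_zero φ (List.map_eq_nil_iff.not.2 hu_ne)
    (List.map_eq_nil_iff.not.2 hv_ne) fun i k => ?_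
  rw [← List.map_drop, ← List.map_take]
  refine hφ.map_prod_append (hu.subset (List.drop_subset i u)) (hv.subset (List.take_subset k v))
    fun p hp q hq => huv p ?_ q ?_
  · rw [List.getLast?_drop] at hp
    split_ifs at hp
    exacts [absurd hp (Option.not_mem_none p), hp]
  · rw [List.head?_take] at hq
    split_ifs at hq
    exacts [absurd hq (Option.not_mem_none q), hq]

theorem IsBooleanIndep.mkValue_eq_map_prod (hφ : IsBooleanIndep φ (A₁ : Set A) A₂)
    (hL : IsLabelledWord A₁ A₂ L) (hL_ne : L ≠ [])
    (hcyc : ∀ p ∈ L.getLast?, ∀ q ∈ L.head?, p.1 ≠ q.1) :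
    mkValue φ (L.map Prod.snd).get = φ (L.map Prod.snd).prod := by
  have hlen : (L.map Prod.snd).length = L.length := List.length_map _
  rw [NCProb.mkValue_eq_map_prod φ (hlen ▸ List.length_pos_iff.2 hL_ne), List.ofFn_get]
  intro m k hm hk
  rw [hlen] at hk
  rw [List.ofFn_get, ← List.map_drop, ← List.map_take]
  refine hφ.booleanCumulant_append_eq_zero (hL.subset (List.drop_subset k L))
    (hL.subset (List.take_subset m L)) ?_ ?_ ?_
  · exact List.drop_eq_nil_iff.not.2 hk.not_ge
  · simp [hm.ne', hL_ne]
  · rwa [List.getLast?_drop, if_neg hk.not_ge, List.head?_take, if_neg hm.ne']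

end LabelledWords

section TensorAlgebraWords

open TensorAlgebra (ι)

lemma linearMap_ext_of_eq_on_words {R M N : Type*} [CommSemiring R] [AddCommMonoid M] [Module R M]
    [AddCommMonoid N] [Module R N] {f g : TensorAlgebra R M →ₗ[R] N}
    (h : ∀ l : List M, f (l.map (ι R)).prod = g (l.map (ι R)).prod) : f = g := by
  have hspan : Submodule.span R
      (Submonoid.closure (Set.range (ι R (M := M))) : Set (TensorAlgebra R M)) = ⊤ := by
    rw [← Algebra.adjoin_eq_span, TensorAlgebra.adjoin_range_ι, Algebra.top_toSubmodule]
  refine LinearMap.ext_on hspan fun t ht => ?_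
  obtain ⟨ts, hts, rfl⟩ := Submonoid.exists_list_of_mem_closure ht
  obtain ⟨l, rfl⟩ : ts ∈ Set.range (List.map (ι R)) := by
    rw [Set.range_list_map]
    exact hts
  exact h l

lemma ExtendsTo.eq_comp_lift_id {φ : A →ₗ[ℂ] ℂ} {φT : TensorAlgebra ℂ A →ₗ[ℂ] ℂ}
    (hφT : ExtendsTo φ φT) (h1 : φT 1 = φ 1) :
    φT = φ ∘ₗ (TensorAlgebra.lift ℂ (LinearMap.id : A →ₗ[ℂ] A)).toLinearMap := by
  refine linearMap_ext_of_eq_on_words fun l => ?_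
  have hlift : TensorAlgebra.lift ℂ (LinearMap.id : A →ₗ[ℂ] A) (l.map (ι ℂ)).prod = l.prod := by
    rw [map_list_prod, List.map_map]
    congr
    simp [Function.comp_def]
  rw [LinearMap.comp_apply, AlgHom.toLinearMap_apply, hlift]
  rcases eq_or_ne l [] with rfl | hl
  · exact h1
  · exact hφT l hl

lemma Alternates.map {α β : Type*} {S₁ S₂ : Set α} {T₁ T₂ : Set β} {f : α → β}
    (h₁ : Set.MapsTo f S₁ T₁) (h₂ : Set.MapsTo f S₂ T₂) {n : ℕ} {a : Fin n → α} {j : Fin n → Bool}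
    (ha : Alternates S₁ S₂ a j) : Alternates T₁ T₂ (fun i => f (a i)) j := by
  refine ⟨fun i => ?_, ha.2⟩
  have hi := ha.1 i
  split_ifs at hi ⊢
  exacts [h₂ hi, h₁ hi]

lemma IsBooleanIndep.map_one {φ : A →ₗ[ℂ] ℂ} {S₁ S₂ : Set A} (hφ : IsBooleanIndep φ S₁ S₂) :
    φ 1 = 1 :=
  hφ 0 Fin.elim0 Fin.elim0 ⟨fun i => i.elim0, fun _ h => absurd h (Nat.not_lt_zero _)⟩

lemma IsBooleanIndep.comp_algHom {B : Type*} [Ring B] [Algebra ℂ B] {φ : B →ₗ[ℂ] ℂ}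
    {T₁ T₂ : Set B} (hφ : IsBooleanIndep φ T₁ T₂) (f : A →ₐ[ℂ] B) {S₁ S₂ : Set A}
    (h₁ : Set.MapsTo f S₁ T₁) (h₂ : Set.MapsTo f S₂ T₂) :
    IsBooleanIndep (φ ∘ₗ f.toLinearMap) S₁ S₂ := by
  intro n a j ha
  rw [LinearMap.comp_apply, AlgHom.toLinearMap_apply, map_list_prod, List.map_ofFn]
  exact hφ n _ j (ha.map h₁ h₂)

/-- The non-unital subalgebra `T₀(C)` of the tensor algebra generated by `C`. -/
abbrev tensorAugmentation (C : NonUnitalSubalgebra ℂ A) :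
    NonUnitalSubalgebra ℂ (TensorAlgebra ℂ A) :=
  NonUnitalAlgebra.adjoin ℂ ((fun x => ι ℂ x) '' (C : Set A))

lemma mapsTo_lift_id_tensorAugmentation (C : NonUnitalSubalgebra ℂ A) :
    Set.MapsTo (TensorAlgebra.lift ℂ (LinearMap.id : A →ₗ[ℂ] A)) (tensorAugmentation C) C := by
  have hle : tensorAugmentation C ≤
      C.comap (TensorAlgebra.lift ℂ (LinearMap.id : A →ₗ[ℂ] A)) := by
    refine NonUnitalAlgebra.adjoin_le ?_
    rintro _ ⟨c, hc, rfl⟩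
    simpa using hc
  exact hle

/-- The tensors `c₁ ⊗ ⋯ ⊗ cₙ`, `n ≥ 1`, of letters of `A₁` and `A₂` whose first letter is labelled
`b` and whose last letter is labelled `b'`. -/
def tensorWords (A₁ A₂ : NonUnitalSubalgebra ℂ A) (b b' : Bool) : Set (TensorAlgebra ℂ A) :=
  {t | ∃ L, IsLabelledWord A₁ A₂ L ∧ L.head?.map Prod.fst = some b ∧
    L.getLast?.map Prod.fst = some b' ∧ ((L.map Prod.snd).map fun x => ι ℂ x).prod = t}

variable {A₁ A₂ : NonUnitalSubalgebra ℂ A}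

lemma ι_mem_tensorWords {b : Bool} {c : A} (hc : c ∈ if b then A₂ else A₁) :
    ι ℂ c ∈ tensorWords A₁ A₂ b b :=
  ⟨[(b, c)], List.forall_mem_singleton.2 hc, rfl, rfl, List.prod_singleton⟩

lemma mul_mem_tensorWords {b c d e : Bool} {s t : TensorAlgebra ℂ A}
    (hs : s ∈ tensorWords A₁ A₂ b c) (ht : t ∈ tensorWords A₁ A₂ d e) :
    s * t ∈ tensorWords A₁ A₂ b e := by
  obtain ⟨u, hu, hu_head, -, rfl⟩ := hs
  obtain ⟨v, hv, -, hv_last, rfl⟩ := ht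
  refine ⟨u ++ v, hu.append hv, ?_, ?_, by simp only [List.map_append, List.prod_append]⟩
  · obtain ⟨p, hp, hpb⟩ := Option.map_eq_some_iff.1 hu_head
    rw [List.head?_append, hp, Option.some_or, Option.map_some, hpb]
  · obtain ⟨q, hq, hqe⟩ := Option.map_eq_some_iff.1 hv_last
    rw [List.getLast?_append, hq, Option.some_or, Option.map_some, hqe]

lemma mul_mem_span_tensorWords {b c d e : Bool} {s t : TensorAlgebra ℂ A}
    (hs : s ∈ Submodule.span ℂ (tensorWords A₁ A₂ b c))
    (ht : t ∈ Submodule.span ℂ (tensorWords A₁ A₂ d e)) :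
    s * t ∈ Submodule.span ℂ (tensorWords A₁ A₂ b e) := by
  have hst := Submodule.mul_mem_mul hs ht
  rw [Submodule.span_mul_span] at hst
  refine Submodule.span_mono ?_ hst
  exact Set.mul_subset_iff.2 fun s hs t ht => mul_mem_tensorWords hs ht

lemma mem_span_tensorWords_of_mem_tensorAugmentation {b : Bool} {t : TensorAlgebra ℂ A}
    (ht : t ∈ tensorAugmentation (if b then A₂ else A₁)) :
    t ∈ Submodule.span ℂ (tensorWords A₁ A₂ b b) := by
  induction ht using NonUnitalAlgebra.adjoin_induction with
  | mem t ht =>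
    obtain ⟨c, hc, rfl⟩ := ht
    exact Submodule.subset_span (ι_mem_tensorWords hc)
  | add s t _ _ hs ht => exact add_mem hs ht
  | zero => exact zero_mem _
  | smul r t _ ht => exact Submodule.smul_mem _ r ht
  | mul s t _ _ hs ht => exact mul_mem_span_tensorWords hs ht

lemma prod_ofFn_mem_span_tensorWords {n : ℕ} {a : Fin (n + 1) → TensorAlgebra ℂ A}
    {j : Fin (n + 1) → Bool} (ha : ∀ i, a i ∈ Submodule.span ℂ (tensorWords A₁ A₂ (j i) (j i))) :
    (List.ofFn a).prod ∈ Submodule.span ℂ (tensorWords A₁ A₂ (j 0) (j (Fin.last n))) := by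
  induction n with
  | zero => simpa using ha 0
  | succ n ih =>
    rw [List.ofFn_succ, List.prod_cons]
    exact mul_mem_span_tensorWords (ha 0) (ih (j := fun i => j i.succ) fun i => ha i.succ)

theorem IsBooleanIndep.eqOn_span_tensorWords {φ : A →ₗ[ℂ] ℂ}
    (hφ : IsBooleanIndep φ (A₁ : Set A) A₂) {φT brφ : TensorAlgebra ℂ A →ₗ[ℂ] ℂ}
    (hφT : ExtendsTo φ φT)
    (hbrφ : ∀ l : List A, l ≠ [] → brφ (l.map fun x => ι ℂ x).prod = mkValue φ l.get)
    {b b' : Bool} (hb : b ≠ b') :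
    Set.EqOn brφ φT (Submodule.span ℂ (tensorWords A₁ A₂ b b')) := by
  refine LinearMap.eqOn_span ?_
  rintro _ ⟨L, hL, hhead, hlast, rfl⟩
  obtain ⟨p, hp, rfl⟩ := Option.map_eq_some_iff.1 hhead
  obtain ⟨q, hq, rfl⟩ := Option.map_eq_some_iff.1 hlast
  have hL_ne : L ≠ [] := fun h => by rw [h] at hp; cases hp
  have hword_ne : L.map Prod.snd ≠ [] := mt List.map_eq_nil_iff.1 hL_ne
  rw [hbrφ _ hword_ne, hφT _ hword_ne, hφ.mkValue_eq_map_prod hL hL_ne]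
  simpa only [hp, hq, Option.mem_some, forall_eq'] using hb.symm

end TensorAlgebraWords

/-- Boolean independence of `(A₁, A₂)` with respect to `φ` implies cyclic
Boolean independence of `T₀(A₁)` and `T₀(A₂)` with respect to `(φ, [φ])`. -/
theorem booleanIndep_implies_cycBooleanIndep_tensorAlgebra
    {A : Type*} [Ring A] [Algebra ℂ A]
    (φ : A →ₗ[ℂ] ℂ)
    (A₁ A₂ : NonUnitalSubalgebra ℂ A)
    (hbool : IsBooleanIndep φ (A₁ : Set A) (A₂ : Set A))
    -- the canonical extension of `φ` to `T(A)` (unital, as required)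
    (φT : TensorAlgebra ℂ A →ₗ[ℂ] ℂ) (hφT1 : φT 1 = 1) (hφT : ExtendsTo φ φT)
    -- the functional `[φ]` on `T(A)`
    (brφ : TensorAlgebra ℂ A →ₗ[ℂ] ℂ) (hbrφ1 : brφ 1 = 1)
    (hbrφ : ∀ l : List A, l ≠ [] →
      brφ (l.map fun x => TensorAlgebra.ι ℂ x).prod = mkValue φ l.get) :
    IsCycBooleanIndep φT brφ
      (↑(NonUnitalAlgebra.adjoin ℂ ((fun x => TensorAlgebra.ι ℂ x) '' (A₁ : Set A))) :
        Set (TensorAlgebra ℂ A))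
      (↑(NonUnitalAlgebra.adjoin ℂ ((fun x => TensorAlgebra.ι ℂ x) '' (A₂ : Set A))) :
        Set (TensorAlgebra ℂ A)) := by
  have hφT_eq := hφT.eq_comp_lift_id (hφT1.trans hbool.map_one.symm)
  refine ⟨?_, fun n a j hn ha hcyc => ?_⟩
  · rw [hφT_eq]
    exact hbool.comp_algHom _ (mapsTo_lift_id_tensorAugmentation A₁)
      (mapsTo_lift_id_tensorAugmentation A₂)
  · obtain ⟨m, rfl⟩ : ∃ m, n = m + 1 := Nat.exists_eq_add_of_le' (by omega)
    have ha_span (i : Fin (m + 1)) : a i ∈ Submodule.span ℂ (tensorWords A₁ A₂ (j i) (j i)) := by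
      refine mem_span_tensorWords_of_mem_tensorAugmentation ?_
      rw [apply_ite tensorAugmentation]
      exact (mem_ite_coe_iff (j i)).1 (ha.1 i)
    exact hbool.eqOn_span_tensorWords hφT hbrφ hcyc (prod_ofFn_mem_span_tensorWords ha_span)

end NCProb
end
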